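/- arXiv:2405.11085 — 2 statements merged into one kernel-verified Lean document; each statement's English description precedes it below -/
import Mathlib

section
/- (Coverability Characterization Lemma) Let M = (Q,T) be a d-dimensional affine continuous VASS all of whose transition matrices are non-negative self-loop matrices, and let p(u), p(v) be configurations with the same state p. Then p(u) covers p(v) in M if and only if there exist a set of counters X ⊆ {1,…,d}, a vector w ∈ ℚ₊^d with w ≥ v, and firing sequences π', π_fwd of M such that: (1) p(u|_X) →^{π'_X} p(w|_X) is a run in the continuous VASS M_X; (2) π_fwd is p-admissible from p(u) in M; (3) every counter x not in X is pumped in the run obtained by firing π_fwd from p(u); (4) the set of transitions occurring in π' equals the set of transitions occurring in π_fwd. -/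
namespace ACVASS

/-- Vectors of rationals indexed by counters. -/
abbrev Vec (d : ℕ) := Fin d → ℚ

/-- A vector is componentwise non-negative (i.e. lies in ℚ₊^d). -/
def NonNeg {d : ℕ} (u : Vec d) : Prop := ∀ i, 0 ≤ u i

/-- Square integer matrices of dimension d. -/
abbrev Mat (d : ℕ) := Matrix (Fin d) (Fin d) ℤ

/-- Transitions of a d-dimensional affine continuous VASS. -/
abbrev Trans (Q : Type) (d : ℕ) := Q × Mat d × (Fin d → ℤ) × Q

def Trans.src {Q : Type} {d : ℕ} (t : Trans Q d) : Q := t.1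
def Trans.mat {Q : Type} {d : ℕ} (t : Trans Q d) : Mat d := t.2.1
def Trans.upd {Q : Type} {d : ℕ} (t : Trans Q d) : Fin d → ℤ := t.2.2.1
def Trans.tgt {Q : Type} {d : ℕ} (t : Trans Q d) : Q := t.2.2.2

/-- Cast an integer matrix to a rational matrix. -/
def castMat {d : ℕ} (A : Mat d) : Matrix (Fin d) (Fin d) ℚ := A.map (Int.cast)

/-- Cast an integer vector to a rational vector. -/
def castVec {d : ℕ} (b : Fin d → ℤ) : Vec d := fun i => (b i : ℚ)

/-- A d-dimensional affine continuous VASS: a finite set of transitions. -/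
structure ACV (Q : Type) (d : ℕ) where
  T : Finset (Trans Q d)

/-- Configurations: a state together with a vector of counter values. -/
abbrev Conf (Q : Type) (d : ℕ) := Q × Vec d

/-- A step `p(u) →^{αt} q(v)`: `t` is a transition of `M`, `α ∈ (0,1]`, both
configurations are non-negative and `v = A·u + α·b`. -/
def Step {Q : Type} {d : ℕ} (M : ACV Q d) (C : Conf Q d) (α : ℚ) (t : Trans Q d)
    (C' : Conf Q d) : Prop :=
  t ∈ M.T ∧ 0 < α ∧ α ≤ 1 ∧ C.1 = t.src ∧ C'.1 = t.tgt ∧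
    NonNeg C.2 ∧ NonNeg C'.2 ∧
    C'.2 = (castMat t.mat).mulVec C.2 + α • castVec t.upd

/-- Firing sequences. -/
abbrev FSeq (Q : Type) (d : ℕ) := List (ℚ × Trans Q d)

/-- `Run M C π C'` : `C →^π C'`, i.e. the steps of `π` can be realized in order. -/
inductive Run {Q : Type} {d : ℕ} (M : ACV Q d) : Conf Q d → FSeq Q d → Conf Q d → Prop
  | nil (C : Conf Q d) (h : NonNeg C.2) : Run M C [] C
  | cons {C C' C'' : Conf Q d} {α : ℚ} {t : Trans Q d} {π : FSeq Q d} :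
      Step M C α t C' → Run M C' π C'' → Run M C ((α, t) :: π) C''

/-- `C →* C'`. -/
def Reach {Q : Type} {d : ℕ} (M : ACV Q d) (C C' : Conf Q d) : Prop := ∃ π, Run M C π C'

/-- `p(u)` covers `q(v)`: `p(u) →* q(v')` for some `v' ≥ v`. -/
def Covers {Q : Type} {d : ℕ} (M : ACV Q d) (C C' : Conf Q d) : Prop :=
  ∃ v', C'.2 ≤ v' ∧ Reach M C (C'.1, v')

/-- Support of a vector. -/
def supp {d : ℕ} (u : Vec d) : Set (Fin d) := {i | u i ≠ 0}

/-- `supp_t^-(x) = {y : A(x,y) > 0}`. -/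
def suppMinus {Q : Type} {d : ℕ} (t : Trans Q d) (x : Fin d) : Set (Fin d) :=
  {y | 0 < t.mat x y}

/-- `supp_t^+ = {x : b(x) > 0}`. -/
def suppPlus {Q : Type} {d : ℕ} (t : Trans Q d) : Set (Fin d) := {x | 0 < t.upd x}

/-- `supp_t^p(x)`: counters that can pump `x` via transition `t`. -/
def suppPump {Q : Type} {d : ℕ} (t : Trans Q d) (x : Fin d) : Set (Fin d) :=
  {y | (y ≠ x ∧ 0 < t.mat x y) ∨ (y = x ∧ 1 < t.mat x y)}

/-- The set of transitions occurring in a firing sequence. -/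
def seqSupp {Q : Type} {d : ℕ} (π : FSeq Q d) : Set (Trans Q d) := {t | ∃ α, (α, t) ∈ π}

/-- Non-negative matrix. -/
def NonNegMat {d : ℕ} (A : Mat d) : Prop := ∀ i j, 0 ≤ A i j

/-- Non-negative self-loop matrix: non-negative with no zero diagonal entry. -/
def SelfLoopMat {d : ℕ} (A : Mat d) : Prop := NonNegMat A ∧ ∀ i, A i i ≠ 0

/-- All transition matrices of `M` are non-negative. -/
def NonNegVASS {Q : Type} {d : ℕ} (M : ACV Q d) : Prop := ∀ t ∈ M.T, NonNegMat t.mat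

/-- All transition matrices of `M` are non-negative self-loop matrices. -/
def SelfLoopVASS {Q : Type} {d : ℕ} (M : ACV Q d) : Prop := ∀ t ∈ M.T, SelfLoopMat t.mat

/-- `β·π`: scale all fractions of a firing sequence by `β`. -/
def scaleSeq {Q : Type} {d : ℕ} (β : ℚ) (π : FSeq Q d) : FSeq Q d :=
  π.map (fun p => (β * p.1, p.2))

/-- Counter `x` is pumped by transition `t` in the run obtained by firing `π` from `C`:
some step of the run uses `t` from a source configuration `C₁` with a counter
`y ∈ supp_t^p(x)` of positive value. -/
def PumpedBy {Q : Type} {d : ℕ} (M : ACV Q d) (C : Conf Q d) (π : FSeq Q d)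
    (t : Trans Q d) (x : Fin d) : Prop :=
  ∃ (π₁ : FSeq Q d) (α : ℚ) (π₂ : FSeq Q d) (C₁ C₂ : Conf Q d),
    π = π₁ ++ (α, t) :: π₂ ∧ Run M C π₁ C₁ ∧ Step M C₁ α t C₂ ∧
    ∃ y ∈ suppPump t x, 0 < C₁.2 y

/-- Counter `x` is pumped in the run obtained by firing `π` from `C`. -/
def Pumps {Q : Type} {d : ℕ} (M : ACV Q d) (C : Conf Q d) (π : FSeq Q d) (x : Fin d) : Prop :=
  ∃ t, PumpedBy M C π t x

/-- Edges of the support abstraction `SU_M`. -/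
def SuppEdge {Q : Type} {d : ℕ} (M : ACV Q d) (v : Q × Set (Fin d)) (t : Trans Q d)
    (v' : Q × Set (Fin d)) : Prop :=
  t ∈ M.T ∧ v.1 = t.src ∧ v'.1 = t.tgt ∧
    ∀ x : Fin d,
      (t.upd x < 0 → (suppMinus t x ∩ v.2).Nonempty) ∧
      (0 < t.upd x → x ∈ v'.2) ∧
      (x ∈ v'.2 → 0 < t.upd x ∨ (suppMinus t x ∩ v.2).Nonempty)

/-- Directed-path reachability in the support abstraction `SU_M`. -/
def SuppReach {Q : Type} {d : ℕ} (M : ACV Q d) :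
    Q × Set (Fin d) → Q × Set (Fin d) → Prop :=
  Relation.ReflTransGen (fun a b => ∃ t, SuppEdge M a t b)

/-- A step of the continuous VASS `M_X` (only the counters in `X` are tracked). -/
def StepX {Q : Type} {d : ℕ} (M : ACV Q d) (X : Set (Fin d)) (p : Q) (u : Vec d) (α : ℚ)
    (t : Trans Q d) (q : Q) (v : Vec d) : Prop :=
  t ∈ M.T ∧ 0 < α ∧ α ≤ 1 ∧ p = t.src ∧ q = t.tgt ∧
    (∀ i ∈ X, 0 ≤ u i) ∧ (∀ i ∈ X, 0 ≤ v i) ∧ (∀ i ∈ X, v i = u i + α * castVec t.upd i)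

/-- A run of the continuous VASS `M_X`; vectors matter only on the counters of `X`. -/
inductive RunX {Q : Type} {d : ℕ} (M : ACV Q d) (X : Set (Fin d)) :
    Q → Vec d → FSeq Q d → Q → Vec d → Prop
  | nil (p : Q) (u v : Vec d) (h : ∀ i ∈ X, 0 ≤ u i ∧ u i = v i) : RunX M X p u [] p v
  | cons {p r q : Q} {u w v : Vec d} {α : ℚ} {t : Trans Q d} {π : FSeq Q d} :
      StepX M X p u α t r w → RunX M X r w π q v → RunX M X p u ((α, t) :: π) q v

/-- One edge of the graph `G_M` using only transitions from `S`. -/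
def GStep {Q : Type} {d : ℕ} (S : Set (Trans Q d)) (a b : Q) : Prop :=
  ∃ t ∈ S, t.src = a ∧ t.tgt = b

/-- A (possibly empty) path in the graph `G_M` using only transitions from `S`. -/
def GPath {Q : Type} {d : ℕ} (S : Set (Trans Q d)) : Q → Q → Prop :=
  Relation.ReflTransGen (GStep S)

/-- `Rep-Half(π)`: the i-th fraction of `π` is divided by `2^i`. -/
def repHalf {Q : Type} {d : ℕ} : FSeq Q d → FSeq Q d
  | [] => []
  | (α, t) :: rest => (α / 2, t) :: scaleSeq (1 / 2) (repHalf rest)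

/-- Descending partial product `A_{ℓ-1} ⋯ A_j` (0-indexed); for `j = ℓ` this is
the identity matrix. -/
def descProd {d ℓ : ℕ} (A : Fin ℓ → Matrix (Fin d) (Fin d) ℚ) (j : ℕ) :
    Matrix (Fin d) (Fin d) ℚ :=
  (((List.finRange ℓ).drop j).reverse.map A).prod

/-- The permutation matrix `P_σ` with `P_σ(i,j) = 1` iff `σ(i) = j`. -/
def permMat {n : ℕ} (σ : Equiv.Perm (Fin n)) : Matrix (Fin n) (Fin n) ℤ :=
  Matrix.of fun i j => if σ i = j then 1 else 0

/-- A matrix is a permutation matrix. -/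
def IsPermMat {d : ℕ} (A : Mat d) : Prop := ∃ σ : Equiv.Perm (Fin d), A = permMat σ

/-- The n×n block-diagonal matrix with blocks `I_o`, `A`, `I_{n-o-k}`:
`A` occupies rows/columns `o,…,o+k-1` and the rest is identity. -/
def applyBlock {k : ℕ} (A : Matrix (Fin k) (Fin k) ℤ) (o n : ℕ) :
    Matrix (Fin n) (Fin n) ℤ :=
  Matrix.of fun r c =>
    if h : o ≤ r.val ∧ r.val < o + k ∧ o ≤ c.val ∧ c.val < o + k then
      A ⟨r.val - o, by omega⟩ ⟨c.val - o, by omega⟩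
    else if r.val = c.val then 1 else 0

/-- Transitions of a continuous VASS (with identity matrices left implicit). -/
abbrev CTrans (Q : Type) (d : ℕ) := Q × (Fin d → ℤ) × Q

/-- Zero-tests. -/
abbrev ZTest (Q : Type) (d : ℕ) := Q × Fin d × Q

/-- A d-dimensional continuous VASS with zero-tests. -/
structure CVZ (Q : Type) (d : ℕ) where
  T : Finset (CTrans Q d)
  T0 : Finset (ZTest Q d)

/-- A transition step of a continuous VASS with zero-tests. -/
def CStep {Q : Type} {d : ℕ} (M : CVZ Q d) (C : Conf Q d) (α : ℚ) (t : CTrans Q d)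
    (C' : Conf Q d) : Prop :=
  t ∈ M.T ∧ 0 < α ∧ α ≤ 1 ∧ C.1 = t.1 ∧ C'.1 = t.2.2 ∧
    NonNeg C.2 ∧ NonNeg C'.2 ∧ C'.2 = C.2 + α • castVec t.2.1

/-- A zero-test step of a continuous VASS with zero-tests. -/
def ZStep {Q : Type} {d : ℕ} (M : CVZ Q d) (C : Conf Q d) (t : ZTest Q d)
    (C' : Conf Q d) : Prop :=
  t ∈ M.T0 ∧ C.1 = t.1 ∧ C'.1 = t.2.2 ∧ NonNeg C.2 ∧ C.2 t.2.1 = 0 ∧ C'.2 = C.2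

/-- A d-dimensional continuous VASS. -/
structure CV (Q : Type) (d : ℕ) where
  T : Finset (CTrans Q d)

/-- A step of a continuous VASS. -/
def CVStep {Q : Type} {d : ℕ} (M : CV Q d) (C : Conf Q d) (α : ℚ) (t : CTrans Q d)
    (C' : Conf Q d) : Prop :=
  t ∈ M.T ∧ 0 < α ∧ α ≤ 1 ∧ C.1 = t.1 ∧ C'.1 = t.2.2 ∧
    NonNeg C.2 ∧ NonNeg C'.2 ∧ C'.2 = C.2 + α • castVec t.2.1

/-- Reachability (`→*`) in a continuous VASS. -/
def CVReach {Q : Type} {d : ℕ} (M : CV Q d) : Conf Q d → Conf Q d → Prop :=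
  Relation.ReflTransGen (fun C C' => ∃ α t, CVStep M C α t C')

/-!
On vectors of `ℚ₊^d`, a step with a self-loop matrix ends at or above the same step with the
identity matrix, and the two agree on a counter unless the step pumps it. Hence the counters that
a covering run does not pump evolve along it as in `M_X`.

Conversely, a small multiple of Rep-Half of `π_fwd` makes every counter that matters positive, and
many tiny copies of `π_fwd` then lift the pumped counters above any bound, while the total fractions
spent stay as small as we like. What is left of the Parikh image of `π'` is fired in two parts:
Rep-Half of `π'` read backwards, which ends where `π'` ends and starts at a positive vector, and
before it many small copies of a reweighting of `π'`, which stay close to the straight segment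
between two positive vectors. On `X` the displacement is then at least that of `π'`, and outside `X`
the pumped values are large enough for everything.
-/

open Filter
open scoped Topology Matrix

section Preliminaries

variable {𝕜 : Type*} [Field 𝕜] [LinearOrder 𝕜] [IsStrictOrderedRing 𝕜] [TopologicalSpace 𝕜]
  [OrderTopology 𝕜]

theorem eventually_mul_le {a b : 𝕜} (hb : 0 ≤ b) (hab : a ≠ 0 → 0 < b) :
    ∀ᶠ ε in 𝓝[>] (0 : 𝕜), ε * a ≤ b := by
  rcases eq_or_ne a 0 with rfl | ha
  · exact .of_forall fun _ => by simpa using hb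
  · filter_upwards [Ioo_mem_nhdsGT (div_pos (hab ha) (abs_pos.2 ha))] with ε hε
    calc ε * a ≤ ε * |a| := mul_le_mul_of_nonneg_left (le_abs_self a) hε.1.le
      _ ≤ b := ((lt_div_iff₀ (abs_pos.2 ha)).1 hε.2).le

theorem exists_nat_of_eventually_nhdsGT [Archimedean 𝕜] {P : 𝕜 → Prop}
    (h : ∀ᶠ ε in 𝓝[>] (0 : 𝕜), P ε) : ∃ n : ℕ, P (1 / (n + 1)) := by
  obtain ⟨δ, hδ, hP⟩ := mem_nhdsGT_iff_exists_Ioo_subset.1 h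
  obtain ⟨n, hn⟩ := exists_nat_one_div_lt (show (0 : 𝕜) < δ from hδ)
  exact ⟨n, hP ⟨Nat.one_div_pos_of_nat, hn⟩⟩

theorem exists_pos_smul_le {ι : Type*} {P P' : ι →₀ ℚ} (hP' : 0 ≤ P')
    (h : ∀ i, P i ≠ 0 → 0 < P' i) : ∃ κ : ℚ, 0 < κ ∧ κ ≤ 1 ∧ κ • P ≤ P' := by
  have hsmall : ∀ᶠ κ in 𝓝[>] (0 : ℚ), ∀ i ∈ P.support, κ * P i ≤ P' i :=
    (eventually_all_finset _).2 fun i _ => eventually_mul_le (hP' i) (h i)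
  obtain ⟨κ, hκ, hpos, hle⟩ := (hsmall.and (Ioc_mem_nhdsGT one_pos)).exists
  refine ⟨κ, hpos, hle, fun i => ?_⟩
  by_cases hi : P i = 0
  · simpa [hi] using hP' i
  · exact hκ i (Finsupp.mem_support_iff.2 hi)

theorem forall_prefix_cons {α : Type*} {P : List α → Prop} {a : α} {l : List α} :
    (∀ l', l' <+: a :: l → P l') ↔ P [] ∧ ∀ l', l' <+: l → P (a :: l') := by
  refine ⟨fun h => ⟨h [] List.nil_prefix, fun l' hl' => h _ (List.cons_prefix_cons.2 ⟨rfl, hl'⟩)⟩,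
    fun ⟨hnil, hcons⟩ l' hl' => ?_⟩
  obtain rfl | ⟨l₁, rfl, hl₁⟩ := List.prefix_cons_iff.1 hl'
  · exact hnil
  · exact hcons l₁ hl₁

end Preliminaries

section SelfLoopMatrices

variable {Q : Type} {d : ℕ} {A : Mat d} {t : Trans Q d} {s s' : Vec d} {x y : Fin d}

theorem SelfLoopMat.nonNegMat_sub_one (hA : SelfLoopMat A) : NonNegMat (A - 1) := by
  intro i j
  rcases eq_or_ne i j with rfl | hij
  · have := hA.1 i i
    have := hA.2 i
    simp only [Matrix.sub_apply, Matrix.one_apply_eq]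
    omega
  · simpa [hij] using hA.1 i j

theorem NonNegMat.mulVec_nonneg (hA : NonNegMat A) (hs : NonNeg s) : NonNeg (castMat A *ᵥ s) :=
  fun i => Finset.sum_nonneg fun j _ => mul_nonneg (Int.cast_nonneg (hA i j)) (hs j)

theorem NonNegMat.mulVec_mono (hA : NonNegMat A) (h : s ≤ s') : castMat A *ᵥ s ≤ castMat A *ᵥ s' :=
  fun i => Finset.sum_le_sum fun j _ =>
    mul_le_mul_of_nonneg_left (h j) (Int.cast_nonneg (hA i j))

theorem castMat_mulVec_eq_add (A : Mat d) (s : Vec d) :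
    castMat A *ᵥ s = s + castMat (A - 1) *ᵥ s := by
  have h : castMat (A - 1) = castMat A - 1 := by
    ext i j
    rcases eq_or_ne i j with rfl | hij <;> simp [castMat, *]
  rw [h, Matrix.sub_mulVec, Matrix.one_mulVec, add_sub_cancel]

theorem SelfLoopMat.le_mulVec (hA : SelfLoopMat A) (hs : NonNeg s) : s ≤ castMat A *ᵥ s := by
  rw [castMat_mulVec_eq_add]
  exact le_add_of_nonneg_right (hA.nonNegMat_sub_one.mulVec_nonneg hs)

theorem mem_suppPump_iff : y ∈ suppPump t x ↔ 0 < (t.mat - 1) x y := by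
  rcases eq_or_ne y x with rfl | h
  · simp [suppPump]
  · simp [suppPump, h, h.symm]

theorem SelfLoopMat.add_le_mulVec_of_mem_suppPump (ht : SelfLoopMat t.mat) (hs : NonNeg s)
    (hy : y ∈ suppPump t x) : s x + s y ≤ (castMat t.mat *ᵥ s) x := by
  have hone : (1 : ℚ) ≤ ((t.mat - 1) x y : ℤ) := by exact_mod_cast mem_suppPump_iff.1 hy
  rw [castMat_mulVec_eq_add, Pi.add_apply]
  refine add_le_add_right ?_ _
  calc s y ≤ castMat (t.mat - 1) x y * s y := le_mul_of_one_le_left (hs y) hone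
    _ ≤ (castMat (t.mat - 1) *ᵥ s) x :=
      Finset.single_le_sum (f := fun z => castMat (t.mat - 1) x z * s z)
        (fun z _ => mul_nonneg (Int.cast_nonneg (ht.nonNegMat_sub_one x z)) (hs z))
        (Finset.mem_univ y)

theorem SelfLoopMat.mulVec_apply_eq_of_suppPump (ht : SelfLoopMat t.mat)
    (h : ∀ y ∈ suppPump t x, s y = 0) : (castMat t.mat *ᵥ s) x = s x := by
  rw [castMat_mulVec_eq_add, Pi.add_apply, add_eq_left]
  change ∑ y, castMat (t.mat - 1) x y * s y = 0
  refine Finset.sum_eq_zero fun y _ => mul_eq_zero.2 ?_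
  rcases (ht.nonNegMat_sub_one x y).eq_or_lt with h0 | hpos
  · exact .inl (by simp [castMat, ← h0])
  · exact .inr (h y (mem_suppPump_iff.2 hpos))

end SelfLoopMatrices

section FiringSequences

variable {Q : Type} {d : ℕ} {M : ACV Q d} {p q r : Q} {C C' : Conf Q d} {X : Set (Fin d)}
  {s u w : Vec d} {a : ℚ × Trans Q d} {σ σ₁ τ : FSeq Q d} {x : Fin d} {m : ℚ}

/-- The update `u ↦ A·u + α·b` of one step, with no non-negativity requirement. -/
def fireStep (s : Vec d) (a : ℚ × Trans Q d) : Vec d :=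
  castMat a.2.mat *ᵥ s + a.1 • castVec a.2.upd

/-- The vector reached by firing a sequence, with no non-negativity requirement. -/
def fire (s : Vec d) (σ : FSeq Q d) : Vec d := σ.foldl fireStep s

/-- The non-negativity part of a run: all vectors met while firing `σ` from `s` are in `ℚ₊^d`. -/
def Admissible (s : Vec d) (σ : FSeq Q d) : Prop := ∀ σ₁, σ₁ <+: σ → NonNeg (fire s σ₁)

/-- The control part of a run: `σ` labels a path from `p` to `q` through transitions of `M`, with
fractions in `(0,1]`. -/
def IsPath (M : ACV Q d) : Q → FSeq Q d → Q → Prop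
  | p, [], q => p = q
  | p, a :: σ, q => a.2 ∈ M.T ∧ 0 < a.1 ∧ a.1 ≤ 1 ∧ p = a.2.src ∧ IsPath M a.2.tgt σ q

/-- The total displacement of a firing sequence when all matrices are replaced by the identity. -/
def effect (σ : FSeq Q d) : Vec d := (σ.map fun a => a.1 • castVec a.2.upd).sum

/-- The sum of the absolute values of all updates of a firing sequence, counter by counter. -/
def variation (σ : FSeq Q d) : Vec d := (σ.map fun a => |a.1 • castVec a.2.upd|).sum

/-- Non-negativity of the counter `x`, started at `m`, while `σ` is fired with all matrices
replaced by the identity; this is how a run of the continuous VASS `M_X` acts on `x ∈ X`. -/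
def StaysNonneg (m : ℚ) (σ : FSeq Q d) (x : Fin d) : Prop := ∀ σ₁, σ₁ <+: σ → 0 ≤ m + effect σ₁ x

/-- The counters that some transition of the sequence updates by a nonzero amount. -/
def touched (σ : FSeq Q d) : Set (Fin d) := {x | ∃ t ∈ seqSupp σ, t.upd x ≠ 0}

theorem fireStep_apply (s : Vec d) (a : ℚ × Trans Q d) (x : Fin d) :
    fireStep s a x = (castMat a.2.mat *ᵥ s) x + a.1 * a.2.upd x := rfl

theorem fire_append (s : Vec d) (σ τ : FSeq Q d) : fire s (σ ++ τ) = fire (fire s σ) τ :=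
  List.foldl_append

theorem Admissible.nonNeg (h : Admissible s σ) : NonNeg s := h [] List.nil_prefix

theorem Admissible.nonNeg_fire (h : Admissible s σ) : NonNeg (fire s σ) := h σ List.prefix_rfl

theorem Admissible.of_prefix (h : Admissible s σ) (hσ₁ : σ₁ <+: σ) : Admissible s σ₁ :=
  fun σ₂ hσ₂ => h σ₂ (hσ₂.trans hσ₁)

theorem admissible_nil : Admissible s ([] : FSeq Q d) ↔ NonNeg s := by
  simp [Admissible, fire]

theorem admissible_cons :
    Admissible s (a :: σ) ↔ NonNeg s ∧ Admissible (fireStep s a) σ := forall_prefix_cons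

theorem admissible_append :
    Admissible s (σ ++ τ) ↔ Admissible s σ ∧ Admissible (fire s σ) τ := by
  induction σ generalizing s with
  | nil => exact ⟨fun h => ⟨admissible_nil.2 h.nonNeg, h⟩, And.right⟩
  | cons a σ ih => rw [List.cons_append, admissible_cons, admissible_cons, ih, and_assoc]; rfl

@[simp] theorem effect_nil : effect ([] : FSeq Q d) = 0 := rfl

@[simp] theorem effect_cons_apply (a : ℚ × Trans Q d) (σ : FSeq Q d) (x : Fin d) :
    effect (a :: σ) x = a.1 * a.2.upd x + effect σ x := by simp [effect, castVec]

@[simp] theorem effect_append (σ τ : FSeq Q d) : effect (σ ++ τ) = effect σ + effect τ := by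
  simp [effect]

@[simp] theorem variation_nil : variation ([] : FSeq Q d) = 0 := rfl

@[simp] theorem variation_cons_apply (a : ℚ × Trans Q d) (σ : FSeq Q d) (x : Fin d) :
    variation (a :: σ) x = |a.1 * a.2.upd x| + variation σ x := by simp [variation, castVec]

@[simp] theorem variation_append (σ τ : FSeq Q d) :
    variation (σ ++ τ) = variation σ + variation τ := by
  simp [variation]

theorem variation_nonneg (σ : FSeq Q d) (x : Fin d) : 0 ≤ variation σ x := by
  induction σ with
  | nil => simp
  | cons a σ ih => rw [variation_cons_apply]; positivity

theorem abs_effect_le_variation (σ : FSeq Q d) (x : Fin d) : |effect σ x| ≤ variation σ x := by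
  induction σ with
  | nil => simp
  | cons a σ ih =>
    rw [effect_cons_apply, variation_cons_apply]
    exact (abs_add_le _ _).trans (by gcongr)

theorem variation_le_of_prefix (h : σ₁ <+: σ) (x : Fin d) : variation σ₁ x ≤ variation σ x := by
  obtain ⟨τ, rfl⟩ := h
  simpa using variation_nonneg τ x

theorem variation_eq_zero_of_notMem_touched (h : x ∉ touched σ) : variation σ x = 0 := by
  induction σ with
  | nil => rfl
  | cons a σ ih =>
    have hx : ∀ t ∈ seqSupp (a :: σ), t.upd x = 0 := by simpa [touched] using h
    have ha : a.2.upd x = 0 := hx _ ⟨a.1, by simp⟩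
    rw [variation_cons_apply, ih, ha]
    · simp
    · rintro ⟨t, ⟨α, ht⟩, htx⟩
      exact htx (hx t ⟨α, List.mem_cons_of_mem _ ht⟩)

theorem StaysNonneg.mono {m' : ℚ} (h : StaysNonneg m σ x) (hm : m ≤ m') : StaysNonneg m' σ x :=
  fun σ₁ hσ₁ => (h σ₁ hσ₁).trans (by gcongr)

theorem staysNonneg_nil : StaysNonneg m ([] : FSeq Q d) x ↔ 0 ≤ m := by
  simp [StaysNonneg]

theorem staysNonneg_cons :
    StaysNonneg m (a :: σ) x ↔ 0 ≤ m ∧ StaysNonneg (m + a.1 * a.2.upd x) σ x := by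
  simp only [StaysNonneg, forall_prefix_cons, effect_nil, Pi.zero_apply, add_zero,
    effect_cons_apply, add_assoc]

theorem StaysNonneg.append (h : StaysNonneg m σ x) (h' : StaysNonneg (m + effect σ x) τ x) :
    StaysNonneg m (σ ++ τ) x := by
  induction σ generalizing m with
  | nil => simpa using h'
  | cons a σ ih =>
    rw [staysNonneg_cons] at h
    refine staysNonneg_cons.2 ⟨h.1, ih h.2 ?_⟩
    rwa [effect_cons_apply, ← add_assoc] at h'

theorem staysNonneg_of_variation_le (h : variation σ x ≤ m) : StaysNonneg m σ x := by
  intro σ₁ hσ₁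
  have := abs_le.1 (abs_effect_le_variation σ₁ x)
  linarith [variation_le_of_prefix hσ₁ x]

theorem IsPath.mem (h : IsPath M p σ q) (ha : a ∈ σ) : a.2 ∈ M.T ∧ 0 < a.1 ∧ a.1 ≤ 1 := by
  induction σ generalizing p with
  | nil => simp at ha
  | cons b σ ih =>
    obtain ⟨hT, hpos, hle, -, hσ⟩ := h
    rcases List.mem_cons.1 ha with rfl | ha
    · exact ⟨hT, hpos, hle⟩
    · exact ih hσ ha

theorem IsPath.pos (h : IsPath M p σ q) : ∀ a ∈ σ, 0 < a.1 := fun _ ha => (h.mem ha).2.1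

theorem IsPath.selfLoopMat (hM : SelfLoopVASS M) (h : IsPath M p σ q) :
    ∀ a ∈ σ, SelfLoopMat a.2.mat := fun _ ha => hM _ (h.mem ha).1

theorem isPath_append :
    IsPath M p (σ ++ τ) r ↔ ∃ q, IsPath M p σ q ∧ IsPath M q τ r := by
  induction σ generalizing p with
  | nil => exact ⟨fun h => ⟨p, rfl, h⟩, fun ⟨_, hp, h⟩ => hp ▸ h⟩
  | cons a σ ih => simp only [List.cons_append, IsPath, ih, ← exists_and_left, ← and_assoc]

theorem IsPath.append (h : IsPath M p σ q) (h' : IsPath M q τ r) : IsPath M p (σ ++ τ) r :=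
  isPath_append.2 ⟨q, h, h'⟩

theorem run_iff :
    Run M C σ C' ↔ IsPath M C.1 σ C'.1 ∧ Admissible C.2 σ ∧ C'.2 = fire C.2 σ := by
  induction σ generalizing C with
  | nil =>
    rw [admissible_nil]
    constructor
    · rintro ⟨⟩
      exact ⟨rfl, ‹_›, rfl⟩
    · rintro ⟨hp, hC, hv⟩
      obtain rfl : C' = C := Prod.ext hp.symm hv
      exact .nil _ hC
  | cons a σ ih =>
    rw [admissible_cons]
    constructor
    · rintro (_ | @⟨_, C₁, _, _, _, _, ⟨hT, hpos, hle, hsrc, htgt, hC, -, hC₁⟩, hrun⟩)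
      obtain ⟨hσ, hadm, hfire⟩ := ih.1 hrun
      rw [htgt] at hσ
      rw [hC₁] at hadm hfire
      exact ⟨⟨hT, hpos, hle, hsrc, hσ⟩, ⟨hC, hadm⟩, hfire⟩
    · rintro ⟨⟨hT, hpos, hle, hsrc, hσ⟩, ⟨hC, hadm⟩, hfire⟩
      exact .cons (C' := (a.2.tgt, fireStep C.2 a))
        ⟨hT, hpos, hle, hsrc, rfl, hC, hadm.nonNeg, rfl⟩ (ih.2 ⟨hσ, hadm, hfire⟩)

theorem runX_iff :
    RunX M X p u σ q w ↔
      IsPath M p σ q ∧ ∀ x ∈ X, StaysNonneg (u x) σ x ∧ w x = u x + effect σ x := by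
  induction σ generalizing p u with
  | nil =>
    simp only [staysNonneg_nil, effect_nil, Pi.zero_apply, add_zero]
    constructor
    · rintro ⟨_, _, _, h⟩
      exact ⟨rfl, fun x hx => ⟨(h x hx).1, (h x hx).2.symm⟩⟩
    · rintro ⟨rfl, h⟩
      exact .nil _ _ _ fun x hx => ⟨(h x hx).1, (h x hx).2.symm⟩
  | cons a σ ih =>
    simp only [staysNonneg_cons, effect_cons_apply, ← add_assoc]
    constructor
    · rintro (_ | @⟨_, _, _, _, u₁, _, _, _, _, ⟨hT, hpos, hle, hsrc, rfl, hu, -, hu₁⟩, hrun⟩)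
      obtain ⟨hσ, h⟩ := ih.1 hrun
      refine ⟨⟨hT, hpos, hle, hsrc, hσ⟩, fun x hx => ?_⟩
      obtain ⟨hstays, heq⟩ := h x hx
      rw [hu₁ x hx] at hstays heq
      exact ⟨⟨hu x hx, hstays⟩, heq⟩
    · rintro ⟨⟨hT, hpos, hle, hsrc, hσ⟩, h⟩
      exact .cons (w := fun x => u x + a.1 * a.2.upd x)
        ⟨hT, hpos, hle, hsrc, rfl, fun x hx => (h x hx).1.1,
          fun x hx => (h x hx).1.2 [] List.nil_prefix |>.trans_eq (by simp), fun _ _ => rfl⟩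
        (ih.2 ⟨hσ, fun x hx => ⟨(h x hx).1.2, (h x hx).2⟩⟩)

/-- `x` is pumped while `σ` is fired from `s`; for runs this is `Pumps`, see `Run.pumps_iff`. -/
def PumpedFrom (s : Vec d) (σ : FSeq Q d) (x : Fin d) : Prop :=
  ∃ σ₁ a σ₂, σ = σ₁ ++ a :: σ₂ ∧ ∃ y ∈ suppPump a.2 x, 0 < fire s σ₁ y

theorem Run.pumps_iff (h : Run M C σ C') : Pumps M C σ x ↔ PumpedFrom C.2 σ x := by
  obtain ⟨hpath, hadm, -⟩ := run_iff.1 h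
  constructor
  · rintro ⟨t, σ₁, α, σ₂, C₁, C₂, rfl, hrun, -, y, hy, hpos⟩
    exact ⟨σ₁, (α, t), σ₂, rfl, y, hy, (run_iff.1 hrun).2.2 ▸ hpos⟩
  · rintro ⟨σ₁, a, σ₂, rfl, y, hy, hpos⟩
    obtain ⟨q, hσ₁, hT, hα, hα1, hsrc, -⟩ := isPath_append.1 hpath
    obtain ⟨hadm₁, hadm₂⟩ := admissible_append.1 hadm
    exact ⟨a.2, σ₁, a.1, σ₂, (q, fire C.2 σ₁), (a.2.tgt, fireStep (fire C.2 σ₁) a), rfl,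
      run_iff.2 ⟨hσ₁, hadm₁, rfl⟩, ⟨hT, hα, hα1, hsrc, rfl, hadm₂.nonNeg,
        (admissible_cons.1 hadm₂).2.nonNeg, rfl⟩, y, hy, hpos⟩

end FiringSequences

section IdentityComparison

variable {Q : Type} {d : ℕ} {s : Vec d} {a : ℚ × Trans Q d} {σ σ₁ σ₂ : FSeq Q d} {x y : Fin d}

theorem SelfLoopMat.add_le_fireStep (ha : SelfLoopMat a.2.mat) (hs : NonNeg s) (x : Fin d) :
    s x + a.1 * a.2.upd x ≤ fireStep s a x :=
  add_le_add_left (ha.le_mulVec hs x) _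

theorem add_effect_le_fire (hσ : ∀ a ∈ σ, SelfLoopMat a.2.mat) (h : Admissible s σ) (x : Fin d) :
    s x + effect σ x ≤ fire s σ x := by
  induction σ generalizing s with
  | nil => simp [fire]
  | cons a σ ih =>
    rw [List.forall_mem_cons] at hσ
    rw [admissible_cons] at h
    calc s x + effect (a :: σ) x = s x + a.1 * a.2.upd x + effect σ x := by
          rw [effect_cons_apply, add_assoc]
      _ ≤ fireStep s a x + effect σ x := by gcongr; exact hσ.1.add_le_fireStep h.1 x
      _ ≤ fire s (a :: σ) x := ih hσ.2 h.2

theorem admissible_of_staysNonneg (hσ : ∀ a ∈ σ, SelfLoopMat a.2.mat)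
    (h : ∀ x, StaysNonneg (s x) σ x) : Admissible s σ := by
  induction σ generalizing s with
  | nil => exact admissible_nil.2 fun x => staysNonneg_nil.1 (h x)
  | cons a σ ih =>
    rw [List.forall_mem_cons] at hσ
    have hs : NonNeg s := fun x => (staysNonneg_cons.1 (h x)).1
    exact admissible_cons.2 ⟨hs, ih hσ.2 fun x =>
      (staysNonneg_cons.1 (h x)).2.mono (hσ.1.add_le_fireStep hs x)⟩

theorem add_effect_add_le_fire_of_mem_suppPump (hσ : ∀ b ∈ σ₁ ++ a :: σ₂, SelfLoopMat b.2.mat)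
    (h : Admissible s (σ₁ ++ a :: σ₂)) (hy : y ∈ suppPump a.2 x) :
    s x + effect (σ₁ ++ a :: σ₂) x + fire s σ₁ y ≤ fire s (σ₁ ++ a :: σ₂) x := by
  obtain ⟨hσ₁, ha, hσ₂⟩ := by simpa only [List.forall_mem_append, List.forall_mem_cons] using hσ
  obtain ⟨h₁, h₂⟩ := admissible_append.1 h
  have hbefore := add_effect_le_fire hσ₁ h₁ x
  have hpump := ha.add_le_mulVec_of_mem_suppPump h₁.nonNeg_fire hy
  have hafter := add_effect_le_fire hσ₂ (admissible_cons.1 h₂).2 x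
  rw [fireStep_apply] at hafter
  rw [fire_append, effect_append, Pi.add_apply, effect_cons_apply]
  exact le_trans (by linarith) hafter

theorem staysNonneg_and_fire_eq_of_not_pumpedFrom (hσ : ∀ a ∈ σ, SelfLoopMat a.2.mat)
    (h : Admissible s σ) (hx : ¬ PumpedFrom s σ x) :
    StaysNonneg (s x) σ x ∧ fire s σ x = s x + effect σ x := by
  induction σ generalizing s with
  | nil => simpa [staysNonneg_nil, fire] using h.nonNeg x
  | cons a σ ih =>
    rw [List.forall_mem_cons] at hσ
    obtain ⟨hs, h⟩ := admissible_cons.1 h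
    have hstep : fireStep s a x = s x + a.1 * a.2.upd x := by
      rw [fireStep_apply, hσ.1.mulVec_apply_eq_of_suppPump fun y hy => ?_]
      exact (hs y).eq_of_not_lt' fun hpos => hx ⟨[], a, σ, rfl, y, hy, hpos⟩
    have hx' : ¬ PumpedFrom (fireStep s a) σ x := fun ⟨σ₁, b, σ₂, hsplit, hb⟩ =>
      hx ⟨a :: σ₁, b, σ₂, by rw [hsplit, List.cons_append], hb⟩
    obtain ⟨hstays, hfire⟩ := ih hσ.2 h hx'
    rw [hstep] at hstays hfire
    exact ⟨staysNonneg_cons.2 ⟨hs x, hstays⟩, by rw [effect_cons_apply, ← add_assoc]; exact hfire⟩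

end IdentityComparison

section Reweighting

variable {Q : Type} {d : ℕ} {M : ACV Q d} {p q : Q} {π ρ σ : FSeq Q d}
  {t : Trans Q d} {κ c : ℚ}

/-- `ρ` fires the transitions of `π` in the same order, with positive fractions that are at most
`κ` times those of `π`. -/
def IsReweighting (κ : ℚ) (π ρ : FSeq Q d) : Prop :=
  List.Forall₂ (fun a b => b.2 = a.2 ∧ 0 < b.1 ∧ b.1 ≤ κ * a.1) π ρ

/-- The Parikh image: the total fraction with which each transition is fired. -/
noncomputable def parikh (σ : FSeq Q d) : Trans Q d →₀ ℚ :=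
  (σ.map fun a => Finsupp.single a.2 a.1).sum

@[simp] theorem parikh_nil : parikh ([] : FSeq Q d) = 0 := rfl

@[simp] theorem parikh_cons (a : ℚ × Trans Q d) (σ : FSeq Q d) :
    parikh (a :: σ) = Finsupp.single a.2 a.1 + parikh σ := List.sum_cons

@[simp] theorem parikh_append (σ τ : FSeq Q d) : parikh (σ ++ τ) = parikh σ + parikh τ := by
  simp [parikh]

theorem effect_eq_linearCombination (σ : FSeq Q d) :
    effect σ = Finsupp.linearCombination ℚ (fun t => castVec t.upd) (parikh σ) := by
  simp [effect, parikh, map_list_sum, Function.comp_def]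

theorem parikh_nonneg (hσ : ∀ a ∈ σ, 0 < a.1) : 0 ≤ parikh σ :=
  List.sum_nonneg <| List.forall_mem_map.2 fun a ha => Finsupp.single_nonneg.2 (hσ a ha).le

theorem parikh_pos (hσ : ∀ a ∈ σ, 0 < a.1) (ht : t ∈ seqSupp σ) : 0 < parikh σ t := by
  obtain ⟨α, hα⟩ := ht
  obtain ⟨σ₁, σ₂, rfl⟩ := List.append_of_mem hα
  simp only [List.forall_mem_append, List.forall_mem_cons] at hσ
  have h₁ := parikh_nonneg hσ.1 t
  have h₂ := parikh_nonneg hσ.2.2 t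
  simp only [parikh_append, parikh_cons, Finsupp.add_apply, Finsupp.single_eq_same]
  simp only [Finsupp.coe_zero, Pi.zero_apply] at h₁ h₂
  linarith [hσ.2.1]

theorem parikh_eq_zero (ht : t ∉ seqSupp σ) : parikh σ t = 0 := by
  induction σ with
  | nil => rfl
  | cons a σ ih =>
    have ha : t ≠ a.2 := fun h => ht ⟨a.1, by simp [h]⟩
    simp [ha.symm, ih fun ⟨α, hα⟩ => ht ⟨α, List.mem_cons_of_mem _ hα⟩]

theorem parikh_map_mul (c : Trans Q d → ℚ) (σ : FSeq Q d) (t : Trans Q d) :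
    parikh (σ.map fun a => (c a.2 * a.1, a.2)) t = c t * parikh σ t := by
  classical
  induction σ with
  | nil => simp
  | cons a σ ih =>
    simp only [List.map_cons, parikh_cons, Finsupp.add_apply, ih, Finsupp.single_apply, mul_add]
    split_ifs with h <;> simp [h]

namespace IsReweighting

theorem pos (h : IsReweighting κ π ρ) : ∀ b ∈ ρ, 0 < b.1 := by
  induction h with
  | nil => simp
  | cons hab _ ih => exact List.forall_mem_cons.2 ⟨hab.2.1, ih⟩

theorem isPath (hκ : κ ≤ 1) (h : IsReweighting κ π ρ) (hπ : IsPath M p π q) : IsPath M p ρ q := by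
  induction h generalizing p with
  | nil => exact hπ
  | cons hab _ ih =>
    obtain ⟨htrans, hpos, hle⟩ := hab
    obtain ⟨hT, hα, hα1, hsrc, hπ⟩ := hπ
    have := mul_le_of_le_one_left hα.le hκ
    exact ⟨htrans ▸ hT, hpos, by linarith, htrans ▸ hsrc, htrans ▸ ih hπ⟩

theorem mono {κ' : ℚ} (hκ : κ ≤ κ') (hπ : ∀ a ∈ π, 0 < a.1) (h : IsReweighting κ π ρ) :
    IsReweighting κ' π ρ := by
  induction h with
  | nil => exact .nil
  | cons hab _ ih =>
    rw [List.forall_mem_cons] at hπ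
    exact .cons ⟨hab.1, hab.2.1, hab.2.2.trans (mul_le_mul_of_nonneg_right hκ hπ.1.le)⟩ (ih hπ.2)

theorem seqSupp_eq (h : IsReweighting κ π ρ) : seqSupp ρ = seqSupp π := by
  have hmem (σ : FSeq Q d) (t : Trans Q d) : t ∈ seqSupp σ ↔ t ∈ σ.map Prod.snd := by
    simp [seqSupp]
  have hmap : ρ.map Prod.snd = π.map Prod.snd := by
    induction h with
    | nil => rfl
    | cons hab _ ih => rw [List.map_cons, List.map_cons, hab.1, ih]
  ext t
  rw [hmem, hmem, hmap]

theorem touched_eq (h : IsReweighting κ π ρ) : touched ρ = touched π := by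
  rw [touched, touched, h.seqSupp_eq]

theorem parikh_le (h : IsReweighting κ π ρ) : parikh ρ ≤ κ • parikh π := by
  classical
  induction h with
  | nil => simp
  | cons hab _ ih =>
    rw [parikh_cons, parikh_cons, smul_add, Finsupp.smul_single, smul_eq_mul, hab.1]
    exact add_le_add (Finsupp.single_mono hab.2.2) ih

end IsReweighting

theorem isReweighting_scaleSeq (hπ : ∀ a ∈ π, 0 < a.1) (hκ : 0 < κ) :
    IsReweighting κ π (scaleSeq κ π) :=
  List.forall₂_map_right_iff.2 <| List.forall₂_same.2 fun a ha =>
    ⟨rfl, mul_pos hκ (hπ a ha), le_rfl⟩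

theorem effect_scaleSeq (c : ℚ) (σ : FSeq Q d) : effect (scaleSeq c σ) = c • effect σ := by
  simp [effect, scaleSeq, List.smul_sum, mul_smul, Function.comp_def]

theorem variation_scaleSeq_apply (hc : 0 ≤ c) (σ : FSeq Q d) (x : Fin d) :
    variation (scaleSeq c σ) x = c * variation σ x := by
  induction σ with
  | nil => simp [scaleSeq]
  | cons a σ ih =>
    rw [scaleSeq, List.map_cons, variation_cons_apply, ← scaleSeq, ih, variation_cons_apply,
      mul_assoc, abs_mul, abs_of_nonneg hc, mul_add]

theorem parikh_scaleSeq (c : ℚ) (σ : FSeq Q d) : parikh (scaleSeq c σ) = c • parikh σ := by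
  ext t
  exact parikh_map_mul (fun _ => c) σ t

theorem exists_isReweighting_parikh_eq (hπ : ∀ a ∈ π, 0 < a.1) {P : Trans Q d →₀ ℚ}
    (hpos : ∀ t ∈ seqSupp π, 0 < P t) (hle : P ≤ parikh π) (hzero : ∀ t ∉ seqSupp π, P t = 0) :
    ∃ ρ, IsReweighting 1 π ρ ∧ parikh ρ = P := by
  refine ⟨π.map fun a => (P a.2 / parikh π a.2 * a.1, a.2), ?_, ?_⟩
  · refine List.forall₂_map_right_iff.2 <| List.forall₂_same.2 fun a ha => ?_
    have hsupp : a.2 ∈ seqSupp π := ⟨a.1, ha⟩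
    have hparikh := parikh_pos hπ hsupp
    exact ⟨rfl, mul_pos (div_pos (hpos _ hsupp) hparikh) (hπ a ha),
      mul_le_mul_of_nonneg_right ((div_le_one hparikh).2 (hle _)) (hπ a ha).le⟩
  · ext t
    rw [parikh_map_mul (fun t => P t / parikh π t)]
    by_cases ht : t ∈ seqSupp π
    · exact div_mul_cancel₀ _ (parikh_pos hπ ht).ne'
    · rw [parikh_eq_zero ht, hzero t ht, mul_zero]

end Reweighting

section RepHalf

variable {Q : Type} {d : ℕ} {a : ℚ × Trans Q d} {π : FSeq Q d} {s s₀ : Vec d} {x : Fin d} {e : ℚ}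

theorem scaleSeq_repHalf_cons (e : ℚ) (a : ℚ × Trans Q d) (π : FSeq Q d) :
    scaleSeq e (repHalf (a :: π)) =
      (e * (a.1 / 2), a.2) :: scaleSeq (e / 2) (repHalf π) := by
  simp [repHalf, scaleSeq, Function.comp_def, ← mul_assoc, div_eq_mul_inv]

theorem isReweighting_scaleSeq_repHalf (he : 0 < e) (hπ : ∀ a ∈ π, 0 < a.1) :
    IsReweighting e π (scaleSeq e (repHalf π)) := by
  induction π generalizing e with
  | nil => exact .nil
  | cons a π ih =>
    rw [List.forall_mem_cons] at hπ
    have ha := mul_pos he hπ.1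
    rw [scaleSeq_repHalf_cons]
    refine .cons ⟨rfl, by linarith, by linarith⟩ ?_
    exact (ih (half_pos he) hπ.2).mono (half_le_self he.le) hπ.2

theorem SelfLoopMat.add_mul_fireStep_le (ha : SelfLoopMat a.2.mat) (hs : NonNeg s)
    (hle : e • s₀ ≤ s) (x : Fin d) :
    s x + e * fireStep s₀ a x ≤ 2 * fireStep s (e * (a.1 / 2), a.2) x := by
  have hself := ha.le_mulVec hs x
  have hmono := ha.1.mulVec_mono hle x
  rw [Matrix.mulVec_smul, Pi.smul_apply, smul_eq_mul] at hmono
  rw [fireStep_apply, fireStep_apply]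
  linarith

theorem SelfLoopMat.fireStep_pos_of_upd_ne_zero (ha : SelfLoopMat a.2.mat) (hα : 0 < a.1)
    (he : 0 < e) (hs : NonNeg s) (hle : e • s₀ ≤ s) (h₀ : 0 ≤ fireStep s₀ a x)
    (hx : a.2.upd x ≠ 0) : 0 < fireStep s (e * (a.1 / 2), a.2) x := by
  have hnonneg := ha.1.mulVec_nonneg hs x
  have hmono := ha.1.mulVec_mono hle x
  rw [Matrix.mulVec_smul, Pi.smul_apply, smul_eq_mul] at hmono
  rw [fireStep_apply] at h₀ ⊢
  have hscaled := mul_nonneg he.le h₀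
  rcases lt_or_gt_of_ne (Int.cast_ne_zero (α := ℚ).2 hx) with hneg | hpos
  · have := mul_neg_of_pos_of_neg (mul_pos he hα) hneg
    linarith
  · have := mul_pos (mul_pos he hα) hpos
    linarith

theorem SelfLoopMat.half_smul_fireStep_le (ha : SelfLoopMat a.2.mat) (hs : NonNeg s)
    (hle : e • s₀ ≤ s) : (e / 2) • fireStep s₀ a ≤ fireStep s (e * (a.1 / 2), a.2) := fun x => by
  rw [Pi.smul_apply, smul_eq_mul]
  linarith [ha.add_mul_fireStep_le hs hle x, hs x]

theorem SelfLoopMat.half_le_fireStep (ha : SelfLoopMat a.2.mat) (hs : NonNeg s) (he : 0 ≤ e)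
    (hle : e • s₀ ≤ s) (h₀ : 0 ≤ fireStep s₀ a x) :
    s x / 2 ≤ fireStep s (e * (a.1 / 2), a.2) x := by
  linarith [ha.add_mul_fireStep_le hs hle x, mul_nonneg he h₀]

theorem admissible_scaleSeq_repHalf (hπ : ∀ a ∈ π, SelfLoopMat a.2.mat) (h₀ : Admissible s₀ π)
    (he : 0 ≤ e) (hs : NonNeg s) (hle : e • s₀ ≤ s) :
    Admissible s (scaleSeq e (repHalf π)) := by
  induction π generalizing s₀ s e with
  | nil => exact admissible_nil.2 hs
  | cons a π ih =>
    rw [List.forall_mem_cons] at hπ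
    rw [admissible_cons] at h₀
    have hhalf x := hπ.1.half_le_fireStep hs he hle (h₀.2.nonNeg x)
    rw [scaleSeq_repHalf_cons, admissible_cons]
    exact ⟨hs, ih hπ.2 h₀.2 (div_nonneg he zero_le_two)
      (fun x => (div_nonneg (hs x) zero_le_two).trans (hhalf x))
      (hπ.1.half_smul_fireStep_le hs hle)⟩

/-- No step of Rep-Half more than halves a counter, so positivity is never lost. -/
theorem fire_scaleSeq_repHalf_pos (hπ : ∀ a ∈ π, SelfLoopMat a.2.mat) (hpos : ∀ a ∈ π, 0 < a.1)
    (h₀ : Admissible s₀ π) (he : 0 < e) (hs : NonNeg s) (hle : e • s₀ ≤ s)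
    (hx : 0 < s x ∨ x ∈ touched π ∨ ∃ σ, σ <+: π ∧ 0 < fire s₀ σ x) :
    0 < fire s (scaleSeq e (repHalf π)) x := by
  have hstart : 0 < s₀ x → 0 < s x := fun h => (mul_pos he h).trans_le (hle x)
  induction π generalizing s₀ s e with
  | nil =>
    rcases hx with hx | ⟨t, ⟨α, ht⟩, -⟩ | ⟨σ, hσ, hx⟩
    · exact hx
    · simp at ht
    · rw [List.prefix_nil.1 hσ] at hx
      exact hstart hx
  | cons a π ih =>
    rw [List.forall_mem_cons] at hπ hpos
    rw [admissible_cons] at h₀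
    have hle' := hπ.1.half_smul_fireStep_le hs hle
    have hhalf x := hπ.1.half_le_fireStep hs he.le hle (h₀.2.nonNeg x)
    have hkeep (h : 0 < s x) := (half_pos h).trans_le (hhalf x)
    rw [scaleSeq_repHalf_cons]
    refine ih hπ.2 hpos.2 h₀.2 (half_pos he)
      (fun y => (div_nonneg (hs y) zero_le_two).trans (hhalf y)) hle' ?_
      fun h => (mul_pos (half_pos he) h).trans_le (hle' x)
    rcases hx with hx | ⟨t, ⟨α, ht⟩, htx⟩ | ⟨σ, hσ, hx⟩
    · exact .inl (hkeep hx)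
    · rcases List.mem_cons.1 ht with rfl | ht
      · exact .inl <| hπ.1.fireStep_pos_of_upd_ne_zero hpos.1 he hs hle (h₀.2.nonNeg x) htx
      · exact .inr <| .inl ⟨t, ⟨α, ht⟩, htx⟩
    · rcases List.prefix_cons_iff.1 hσ with rfl | ⟨σ₁, rfl, hσ₁⟩
      · exact .inl (hkeep (hstart hx))
      · exact .inr <| .inr ⟨σ₁, hσ₁, hx⟩

end RepHalf

section RevHalf

variable {Q : Type} {d : ℕ} {π σ : FSeq Q d} {x : Fin d} {κ r : ℚ}

/-- Rep-Half read from the end and scaled by `κ`: the `i`-th fraction from the end is multiplied by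
`κ / 2 ^ i`. -/
def revHalf (κ : ℚ) : FSeq Q d → FSeq Q d
  | [] => []
  | a :: π => (κ / 2 ^ (π.length + 1) * a.1, a.2) :: revHalf κ π

theorem isReweighting_revHalf (hκ : 0 < κ) (hπ : ∀ a ∈ π, 0 < a.1) :
    IsReweighting κ π (revHalf κ π) := by
  induction π with
  | nil => exact .nil
  | cons a π ih =>
    rw [List.forall_mem_cons] at hπ
    refine .cons ⟨rfl, mul_pos (by positivity) hπ.1, ?_⟩ (ih hπ.2)
    exact mul_le_mul_of_nonneg_right (div_le_self hκ.le (one_le_pow₀ one_le_two)) hπ.1.le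

theorem mul_add_effect_le_sub_effect_revHalf (hκ : 0 ≤ κ) (hκ1 : κ ≤ 1)
    (h : StaysNonneg r π x) (hσ : σ <+: π) :
    κ / 2 ^ π.length * (r + effect σ x) ≤ r + effect π x - effect (revHalf κ π) x := by
  induction π generalizing r σ with
  | nil => simpa [List.prefix_nil.1 hσ, revHalf] using
      mul_le_of_le_one_left (staysNonneg_nil.1 h) hκ1
  | cons a π ih =>
    rw [staysNonneg_cons] at h
    have hnext := ih h.2 List.nil_prefix
    set c := κ / 2 ^ (π.length + 1) with hc
    have hdouble : κ / 2 ^ π.length = 2 * c := by rw [hc, pow_succ]; ring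
    have hc0 : 0 ≤ c := by positivity
    simp only [hdouble, effect_nil, Pi.zero_apply, add_zero] at hnext ih
    simp only [revHalf, List.length_cons, effect_cons_apply, ← hc]
    rcases List.prefix_cons_iff.1 hσ with rfl | ⟨σ₁, rfl, hσ₁⟩
    · have := mul_nonneg hc0 (h.2 [] List.nil_prefix)
      simp only [effect_nil, Pi.zero_apply, add_zero] at this ⊢
      linarith
    · have := ih h.2 hσ₁
      have := mul_nonneg hc0 h.1
      rw [effect_cons_apply]
      linarith

theorem staysNonneg_revHalf (hκ : 0 ≤ κ) (hκ1 : κ ≤ 1) (h : StaysNonneg r π x) :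
    StaysNonneg (r + effect π x - effect (revHalf κ π) x) (revHalf κ π) x := by
  have hstart := mul_add_effect_le_sub_effect_revHalf hκ hκ1 h List.nil_prefix
  have hnonneg := (mul_nonneg (by positivity) (h [] List.nil_prefix)).trans hstart
  induction π generalizing r with
  | nil => exact staysNonneg_nil.2 hnonneg
  | cons a π ih =>
    refine staysNonneg_cons.2 ⟨hnonneg, ?_⟩
    have htail := (staysNonneg_cons.1 h).2
    have hnext := mul_add_effect_le_sub_effect_revHalf hκ hκ1 htail List.nil_prefix
    convert ih htail hnext ((mul_nonneg (by positivity) (htail [] List.nil_prefix)).trans hnext)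
      using 1
    rw [effect_cons_apply, revHalf, effect_cons_apply]
    ring

theorem exists_prefix_pos_of_mem_touched (hπ : ∀ a ∈ π, 0 < a.1) (h : StaysNonneg r π x)
    (hx : x ∈ touched π) : ∃ σ, σ <+: π ∧ 0 < r + effect σ x := by
  induction π generalizing r with
  | nil => obtain ⟨t, ⟨α, ht⟩, -⟩ := hx; simp at ht
  | cons a π ih =>
    rw [List.forall_mem_cons] at hπ
    rw [staysNonneg_cons] at h
    obtain ⟨t, ⟨α, ht⟩, htx⟩ := hx
    rcases List.mem_cons.1 ht with rfl | ht
    · by_contra! hall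
      have hstart := hall [] List.nil_prefix
      have hnext := hall [(α, t)] (List.prefix_append [_] π)
      have hnext' := h.2 [] List.nil_prefix
      simp only [effect_cons_apply, effect_nil, Pi.zero_apply, add_zero] at hstart hnext hnext'
      have hzero : α * (t.upd x : ℚ) = 0 := by linarith [h.1]
      exact (mul_ne_zero hπ.1.ne' (Int.cast_ne_zero.2 htx)) hzero
    · obtain ⟨σ, hσ, hpos⟩ := ih hπ.2 h.2 ⟨t, ⟨α, ht⟩, htx⟩
      exact ⟨a :: σ, List.cons_prefix_cons.2 ⟨rfl, hσ⟩, by rwa [effect_cons_apply, ← add_assoc]⟩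

theorem sub_effect_revHalf_pos (hκ : 0 < κ) (hκ1 : κ ≤ 1) (hπ : ∀ a ∈ π, 0 < a.1)
    (h : StaysNonneg r π x) (hx : x ∈ touched π) :
    0 < r + effect π x - effect (revHalf κ π) x := by
  obtain ⟨σ, hσ, hpos⟩ := exists_prefix_pos_of_mem_touched hπ h hx
  exact (mul_pos (by positivity) hpos).trans_le
    (mul_add_effect_le_sub_effect_revHalf hκ.le hκ1 h hσ)

end RevHalf

section Copies

variable {Q : Type} {d : ℕ} {M : ACV Q d} {p : Q} {π μ σ σ₁ : FSeq Q d} {s : Vec d} {x y : Fin d}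
  {r ε : ℚ} {k : ℕ}

/-- `σ` fired `k` times in a row. -/
def copies (k : ℕ) (σ : FSeq Q d) : FSeq Q d := (List.replicate k σ).flatten

theorem copies_zero (σ : FSeq Q d) : copies 0 σ = [] := rfl

theorem copies_succ (k : ℕ) (σ : FSeq Q d) : copies (k + 1) σ = copies k σ ++ σ := by
  simp [copies, List.replicate_succ']

theorem copies_add (j k : ℕ) (σ : FSeq Q d) : copies (j + k) σ = copies j σ ++ copies k σ := by
  rw [copies, List.replicate_add, List.flatten_append, copies, copies]

theorem IsPath.copies (h : IsPath M p σ p) (k : ℕ) : IsPath M p (copies k σ) p := by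
  induction k with
  | zero => rfl
  | succ k ih => rw [copies_succ]; exact ih.append h

theorem effect_copies (k : ℕ) (σ : FSeq Q d) : effect (copies k σ) = (k : ℚ) • effect σ := by
  induction k with
  | zero => simp [copies_zero]
  | succ k ih => rw [copies_succ, effect_append, ih, Nat.cast_succ, add_smul, one_smul]

theorem variation_copies (k : ℕ) (σ : FSeq Q d) :
    variation (copies k σ) = (k : ℚ) • variation σ := by
  induction k with
  | zero => simp [copies_zero]
  | succ k ih => rw [copies_succ, variation_append, ih, Nat.cast_succ, add_smul, one_smul]

theorem parikh_copies (k : ℕ) (σ : FSeq Q d) : parikh (copies k σ) = (k : ℚ) • parikh σ := by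
  induction k with
  | zero => simp [copies_zero]
  | succ k ih => rw [copies_succ, parikh_append, ih, Nat.cast_succ, add_smul, one_smul]

theorem staysNonneg_copies (hstart : variation σ x ≤ r)
    (hend : variation σ x ≤ r + k * effect σ x) : StaysNonneg r (copies k σ) x := by
  have hr : 0 ≤ r := (variation_nonneg σ x).trans hstart
  induction k with
  | zero => exact staysNonneg_nil.2 hr
  | succ k ih =>
    have hmid : variation σ x ≤ r + k * effect σ x := by
      rcases le_total 0 (effect σ x) with h | h
      · exact hstart.trans (le_add_of_nonneg_right (by positivity))
      · push_cast at hend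
        linarith
    rw [copies_succ]
    refine (ih hmid).append (staysNonneg_of_variation_le ?_)
    rwa [effect_copies]

/-- Firing many equally small copies of a loop approximates the straight segment between the two
endpoints, so it is enough that the endpoints are positive. -/
theorem exists_staysNonneg_of_endpoints_pos (hμ : IsPath M p μ p) (hs : NonNeg s)
    (hpos : ∀ x ∈ touched μ, 0 < s x ∧ 0 < s x + effect μ x) :
    ∃ τ, IsPath M p τ p ∧ effect τ = effect μ ∧ ∀ x, StaysNonneg (s x) τ x := by
  have hsmall : ∀ᶠ ε in 𝓝[>] (0 : ℚ), ∀ x,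
      ε * variation μ x ≤ min (s x) (s x + effect μ x) := by
    refine eventually_all.2 fun x => ?_
    by_cases hx : x ∈ touched μ
    · have := lt_min (hpos x hx).1 (hpos x hx).2
      exact eventually_mul_le this.le fun _ => this
    · have hzero := variation_eq_zero_of_notMem_touched hx
      have heffect := abs_nonpos_iff.1 ((abs_effect_le_variation μ x).trans_eq hzero)
      refine eventually_mul_le ?_ fun h => absurd hzero h
      simpa [heffect] using hs x
  obtain ⟨n, hn⟩ := exists_nat_of_eventually_nhdsGT hsmall
  have hc : (0 : ℚ) < 1 / (n + 1) := Nat.one_div_pos_of_nat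
  have hc1 : (1 : ℚ) / (n + 1) ≤ 1 := (div_le_one (by positivity)).2 (by simp)
  have hcopies : ((n + 1 : ℕ) : ℚ) • (1 / (n + 1 : ℚ)) • effect μ = effect μ := by
    rw [smul_smul, Nat.cast_succ, mul_one_div_cancel (by positivity), one_smul]
  refine ⟨copies (n + 1) (scaleSeq (1 / (n + 1)) μ),
    ((isReweighting_scaleSeq hμ.pos hc).isPath hc1 hμ).copies _, ?_, fun x => ?_⟩
  · rw [effect_copies, effect_scaleSeq, hcopies]
  · have hx := le_min_iff.1 (hn x)
    rw [← variation_scaleSeq_apply hc.le] at hx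
    refine staysNonneg_copies hx.1 (hx.2.trans_eq ?_)
    rw [effect_scaleSeq, ← congrFun hcopies x]
    rfl

theorem half_le_fire_of_prefix (hσ : ∀ a ∈ σ, SelfLoopMat a.2.mat) (h : Admissible s σ)
    (hvar : variation σ x ≤ s x / 2) (hσ₁ : σ₁ <+: σ) : s x / 2 ≤ fire s σ₁ x := by
  have hfire := add_effect_le_fire (fun a ha => hσ a (hσ₁.mem ha)) (h.of_prefix hσ₁) x
  have heffect := (abs_le.1 (abs_effect_le_variation σ₁ x)).1
  linarith [variation_le_of_prefix hσ₁ x]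

theorem add_mul_half_le_fire_copies {σ₂ : FSeq Q d} {a : ℚ × Trans Q d}
    (hsplit : σ = σ₁ ++ a :: σ₂) (hσ : ∀ a ∈ σ, SelfLoopMat a.2.mat) (h : Admissible s (copies k σ))
    (hvar : variation (copies k σ) y ≤ s y / 2) (hy : y ∈ suppPump a.2 x) :
    s x + effect (copies k σ) x + k * (s y / 2) ≤ fire s (copies k σ) x := by
  have hcopies : ∀ a ∈ copies k σ, SelfLoopMat a.2.mat := fun a ha => by
    obtain ⟨l, hl, hal⟩ := List.mem_flatten.1 ha
    exact hσ a (List.eq_of_mem_replicate hl ▸ hal)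
  have hround (j) (hj : j < k) : copies j σ ++ σ <+: copies k σ := by
    obtain ⟨i, rfl⟩ := Nat.exists_eq_add_of_lt hj
    rw [add_right_comm, copies_add, copies_succ]
    exact List.prefix_append ..
  suffices ∀ j ≤ k, s x + effect (copies j σ) x + j * (s y / 2) ≤ fire s (copies j σ) x from
    this k le_rfl
  intro j hj
  induction j with
  | zero => simp [copies_zero, fire]
  | succ j ih =>
    have hadm := (admissible_append.1 (h.of_prefix (hround j hj))).2
    have hsource : s y / 2 ≤ fire (fire s (copies j σ)) σ₁ y := by
      rw [← fire_append]
      refine half_le_fire_of_prefix hcopies h hvar (.trans ?_ (hround j hj))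
      exact (List.prefix_append_right_inj _).2 (hsplit ▸ List.prefix_append ..)
    subst hsplit
    have hpump := add_effect_add_le_fire_of_mem_suppPump hσ hadm hy
    have := ih (Nat.le_of_succ_le hj)
    rw [copies_succ, effect_append, fire_append, Pi.add_apply, Nat.cast_succ]
    linarith

theorem exists_pumping_loop (hM : SelfLoopVASS M) (hπ : IsPath M p π p) (hs : NonNeg s)
    (hpos : ∀ x ∈ touched π, 0 < s x) (hε : 0 < ε) (B : Vec d) :
    ∃ χ, IsPath M p χ p ∧ Admissible s χ ∧ parikh χ ≤ ε • parikh π ∧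
      (∀ x, s x / 2 ≤ fire s χ x) ∧
      ∀ a ∈ π, ∀ x, ∀ y ∈ suppPump a.2 x, 0 < s y → B x + effect χ x ≤ fire s χ x := by
  have hlarge : ∀ᶠ K : ℕ in atTop, ∀ x y, 0 < s y → B x ≤ K * (s y / 2) :=
    eventually_all.2 fun x => eventually_all.2 fun y => eventually_imp_distrib_left.2 fun hy =>
      (tendsto_natCast_atTop_atTop.atTop_mul_const (half_pos hy)).eventually_ge_atTop _
  obtain ⟨K, hK⟩ := hlarge.exists
  have hsmall : ∀ᶠ c in 𝓝[>] (0 : ℚ), ∀ x, c * (K * variation π x) ≤ s x / 2 := by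
    refine eventually_all.2 fun x => eventually_mul_le (div_nonneg (hs x) zero_le_two) fun h => ?_
    refine half_pos (hpos x ?_)
    contrapose! h
    rw [variation_eq_zero_of_notMem_touched h, mul_zero]
  have hsmallε : ∀ᶠ c in 𝓝[>] (0 : ℚ), c * K ≤ ε := eventually_mul_le hε.le fun _ => hε
  obtain ⟨c, hvar, hcε, hc, hc1⟩ := (hsmall.and (hsmallε.and (Ioc_mem_nhdsGT one_pos))).exists
  have hloop := (isReweighting_scaleSeq hπ.pos hc).isPath hc1 hπ
  have hχ := hloop.copies K
  have hvarχ (x) : variation (copies K (scaleSeq c π)) x ≤ s x / 2 := by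
    rw [variation_copies, Pi.smul_apply, variation_scaleSeq_apply hc.le, smul_eq_mul,
      mul_left_comm]
    exact hvar x
  have hadm := admissible_of_staysNonneg (hχ.selfLoopMat hM) fun x =>
    staysNonneg_of_variation_le ((hvarχ x).trans (half_le_self (hs x)))
  refine ⟨copies K (scaleSeq c π), hχ, hadm, ?_, fun x =>
    half_le_fire_of_prefix (hχ.selfLoopMat hM) hadm (hvarχ x) List.prefix_rfl, ?_⟩
  · rw [parikh_copies, parikh_scaleSeq, smul_smul, mul_comm]
    exact smul_le_smul_of_nonneg_right hcε (parikh_nonneg hπ.pos)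
  · intro a ha x y hy hsy
    obtain ⟨σ₁, σ₂, hsplit⟩ := List.append_of_mem ha
    have hpump := add_mul_half_le_fire_copies (a := (c * a.1, a.2)) (σ₁ := scaleSeq c σ₁)
      (σ₂ := scaleSeq c σ₂) (by simp [hsplit, scaleSeq]) (hloop.selfLoopMat hM) hadm (hvarχ y) hy
    linarith [hK x y hsy, hs x]

end Copies

section Characterization

variable {Q : Type} {d : ℕ} {M : ACV Q d} {p : Q} {u v w s r : Vec d} {X : Set (Fin d)}
  {π π' Φ : FSeq Q d} {κ : ℚ}

theorem exists_pumped_prefix (hM : SelfLoopVASS M) (hπ : IsPath M p π p) (hu : Admissible u π)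
    (hκ : 0 < κ) (hκ1 : κ ≤ 1) (B : Vec d) :
    ∃ Φ, IsPath M p Φ p ∧ Admissible u Φ ∧ parikh Φ ≤ κ • parikh π ∧
      (∀ x ∈ touched π, 0 < fire u Φ x) ∧
      ∀ x, PumpedFrom u π x → B x + effect Φ x ≤ fire u Φ x := by
  have hhalf : 0 < κ / 2 := half_pos hκ
  have hφ := isReweighting_scaleSeq_repHalf hhalf hπ.pos
  set φ := scaleSeq (κ / 2) (repHalf π)
  have hφpath := hφ.isPath (by linarith) hπ
  have hle : (κ / 2) • u ≤ u := fun x => mul_le_of_le_one_left (hu.nonNeg x) (by linarith)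
  have hadm : Admissible u φ :=
    admissible_scaleSeq_repHalf (hπ.selfLoopMat hM) hu hhalf.le hu.nonNeg hle
  have hpos {x} (hx : x ∈ touched π ∨ ∃ σ, σ <+: π ∧ 0 < fire u σ x) : 0 < fire u φ x :=
    fire_scaleSeq_repHalf_pos (hπ.selfLoopMat hM) hπ.pos hu hhalf hu.nonNeg hle (.inr hx)
  obtain ⟨χ, hχpath, hχadm, hχparikh, hχhalf, hχpump⟩ := exists_pumping_loop hM hπ
    hadm.nonNeg_fire (fun x hx => hpos (.inl hx)) hhalf (B + effect φ)
  refine ⟨φ ++ χ, hφpath.append hχpath, admissible_append.2 ⟨hadm, hχadm⟩, ?_, fun x hx => ?_, ?_⟩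
  · rw [parikh_append, ← add_halves κ, add_smul]
    exact add_le_add hφ.parikh_le hχparikh
  · rw [fire_append]
    exact (half_pos (hpos (.inl hx))).trans_le (hχhalf x)
  · rintro x ⟨σ₁, a, σ₂, rfl, y, hy, hsource⟩
    rw [fire_append, effect_append, Pi.add_apply, ← add_assoc]
    exact hχpump a (by simp) x y hy (hpos (.inr ⟨σ₁, List.prefix_append .., hsource⟩))

/-- The middle part of the loop fires what is left of the Parikh image of `π'` after `Φ` and the
final Rep-Half part, so that the total displacement is that of `π'`. -/
theorem exists_loop_completing_effect (hπ' : IsPath M p π' p) (hr : ∀ x, StaysNonneg (r x) π' x)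
    (hΦ : 0 ≤ parikh Φ) (hΦπ' : parikh Φ ≤ (1 / 4 : ℚ) • parikh π') (hs : NonNeg s)
    (hrs : r + effect Φ ≤ s) (hpos : ∀ x ∈ touched π', 0 < s x) :
    ∃ τ, IsPath M p τ p ∧ (∀ x, StaysNonneg (s x) τ x) ∧ effect Φ + effect τ = effect π' := by
  have hρ := isReweighting_revHalf (κ := 1 / 4) (by norm_num) hπ'.pos
  set ρ := revHalf (1 / 4) π'
  have hΦ₀ (t) : 0 ≤ parikh Φ t ∧ parikh Φ t ≤ 1 / 4 * parikh π' t := ⟨hΦ t, hΦπ' t⟩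
  have hρ₀ (t) : 0 ≤ parikh ρ t ∧ parikh ρ t ≤ 1 / 4 * parikh π' t :=
    ⟨parikh_nonneg hρ.pos t, hρ.parikh_le t⟩
  obtain ⟨μ, hμ, hμparikh⟩ := exists_isReweighting_parikh_eq hπ'.pos
    (P := parikh π' - parikh Φ - parikh ρ)
    (fun t ht => by
      simp only [Finsupp.sub_apply]
      linarith [parikh_pos hπ'.pos ht, hΦ₀ t, hρ₀ t])
    (fun t => by
      simp only [Finsupp.sub_apply]
      linarith [hΦ₀ t, hρ₀ t])
    (fun t ht => by
      have hzero := parikh_eq_zero ht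
      simp only [Finsupp.sub_apply]
      linarith [hΦ₀ t, hρ₀ t])
  have hμeffect : effect μ = effect π' - effect Φ - effect ρ := by
    simp only [effect_eq_linearCombination, hμparikh, map_sub]
  have hend (x) : r x + effect π' x - effect ρ x ≤ s x + effect μ x := by
    have := hrs x
    simp only [hμeffect, Pi.add_apply, Pi.sub_apply] at this ⊢
    linarith
  have hquarter : (0 : ℚ) < 1 / 4 ∧ (1 / 4 : ℚ) ≤ 1 := by norm_num
  obtain ⟨τ, hτpath, hτeffect, hτ⟩ := exists_staysNonneg_of_endpoints_pos
    (hμ.isPath le_rfl hπ') hs fun x hx => by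
      rw [hμ.touched_eq] at hx
      exact ⟨hpos x hx,
        (sub_effect_revHalf_pos hquarter.1 hquarter.2 hπ'.pos (hr x) hx).trans_le (hend x)⟩
  refine ⟨τ ++ ρ, hτpath.append (hρ.isPath hquarter.2 hπ'), fun x => (hτ x).append ?_, ?_⟩
  · rw [hτeffect]
    exact (staysNonneg_revHalf hquarter.1.le hquarter.2 (hr x)).mono (hend x)
  · rw [effect_append, hτeffect, hμeffect]
    abel

theorem Covers.exists_pumped_runs (hM : SelfLoopVASS M) (h : Covers M (p, u) (p, v)) :
    ∃ (X : Set (Fin d)) (w : Vec d) (π' πfwd : FSeq Q d),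
      NonNeg w ∧ v ≤ w ∧ RunX M X p u π' p w ∧ (∃ v', Run M (p, u) πfwd (p, v')) ∧
      (∀ x, x ∉ X → Pumps M (p, u) πfwd x) ∧ seqSupp π' = seqSupp πfwd := by
  obtain ⟨w, hvw, π, hrun⟩ := h
  obtain ⟨hpath, hadm, hw⟩ := run_iff.1 hrun
  dsimp only at hpath hadm hw
  refine ⟨{x | ¬ Pumps M (p, u) π x}, w, π, π, hw ▸ hadm.nonNeg_fire, hvw,
    runX_iff.2 ⟨hpath, fun x hx => ?_⟩, ⟨w, hrun⟩, fun x hx => not_not.1 hx, rfl⟩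
  rw [Set.mem_ofPred_eq, hrun.pumps_iff] at hx
  rw [hw]
  exact staysNonneg_and_fire_eq_of_not_pumpedFrom (hpath.selfLoopMat hM) hadm hx

theorem covers_of_pumped_runs {v' : Vec d} (hM : SelfLoopVASS M) (hw : NonNeg w) (hvw : v ≤ w)
    (hX : RunX M X p u π' p w) (hfwd : Run M (p, u) π (p, v'))
    (hpump : ∀ x, x ∉ X → Pumps M (p, u) π x) (hsupp : seqSupp π' = seqSupp π) :
    Covers M (p, u) (p, v) := by
  classical
  obtain ⟨hπ', hflat⟩ := runX_iff.1 hX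
  obtain ⟨hπ, hadm, -⟩ := run_iff.1 hfwd
  obtain ⟨κ, hκ, hκ1, hκπ⟩ := exists_pos_smul_le (P := parikh π) (P' := (1 / 4 : ℚ) • parikh π')
    (smul_nonneg (by norm_num) (parikh_nonneg hπ'.pos)) fun t ht => by
      have := parikh_pos hπ'.pos (hsupp ▸ not_imp_comm.1 parikh_eq_zero ht)
      rw [Finsupp.smul_apply, smul_eq_mul]
      positivity
  obtain ⟨Φ, hΦ, hΦadm, hΦparikh, hΦpos, hΦpump⟩ :=
    exists_pumped_prefix hM hπ hadm hκ hκ1 (w + variation π')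
  let r : Vec d := fun x => if x ∈ X then u x else w x + variation π' x
  have hr (x) : StaysNonneg (r x) π' x ∧ w x ≤ r x + effect π' x := by
    by_cases hx : x ∈ X
    · simpa [r, hx] using ⟨(hflat x hx).1, (hflat x hx).2.le⟩
    · have := (abs_le.1 (abs_effect_le_variation π' x)).1
      simp only [r, hx, if_false]
      exact ⟨staysNonneg_of_variation_le (le_add_of_nonneg_left (hw x)), by linarith⟩
  have hrΦ : r + effect Φ ≤ fire u Φ := fun x => by
    by_cases hx : x ∈ X
    · simpa [r, hx] using add_effect_le_fire (hΦ.selfLoopMat hM) hΦadm x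
    · simpa [r, hx] using hΦpump x (hfwd.pumps_iff.1 (hpump x hx))
  obtain ⟨τ, hτ, hτstays, heffect⟩ := exists_loop_completing_effect hπ' (fun x => (hr x).1)
    (parikh_nonneg hΦ.pos) (hΦparikh.trans hκπ) hΦadm.nonNeg_fire hrΦ fun x hx =>
      hΦpos x (by rwa [touched, ← hsupp])
  have hτadm := admissible_of_staysNonneg (hτ.selfLoopMat hM) hτstays
  refine ⟨fire u (Φ ++ τ), fun x => ?_, Φ ++ τ,
    run_iff.2 ⟨hΦ.append hτ, admissible_append.2 ⟨hΦadm, hτadm⟩, rfl⟩⟩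
  calc v x ≤ w x := hvw x
    _ ≤ r x + effect π' x := (hr x).2
    _ = (r + effect Φ) x + effect τ x := by rw [← heffect, Pi.add_apply, Pi.add_apply, add_assoc]
    _ ≤ fire u Φ x + effect τ x := by gcongr; exact hrΦ x
    _ ≤ fire u (Φ ++ τ) x := by
      rw [fire_append]; exact add_effect_le_fire (hτ.selfLoopMat hM) hτadm x

end Characterization

theorem coverability_characterization_general {Q : Type} {d : ℕ} (M : ACV Q d)
    (hM : SelfLoopVASS M) (p : Q) (u v : Vec d) :
    Covers M (p, u) (p, v) ↔
      ∃ (X : Set (Fin d)) (w : Vec d) (π' πfwd : FSeq Q d),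
        NonNeg w ∧ v ≤ w ∧
        RunX M X p u π' p w ∧
        (∃ z : Vec d, Run M (p, u) πfwd (p, z)) ∧
        (∀ x : Fin d, x ∉ X → Pumps M (p, u) πfwd x) ∧
        seqSupp π' = seqSupp πfwd :=
  ⟨Covers.exists_pumped_runs hM, fun ⟨_, _, _, _, hw, hvw, hX, ⟨_, hfwd⟩, hpump, hsupp⟩ =>
    covers_of_pumped_runs hM hw hvw hX hfwd hpump hsupp⟩

/-- Coverability Characterization Lemma. -/
theorem coverability_characterization
    {Q : Type} [Fintype Q] {d : ℕ} (M : ACV Q d) (hM : SelfLoopVASS M)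
    (p : Q) (u v : Vec d) (hu : NonNeg u) (hv : NonNeg v) :
    Covers M (p, u) (p, v) ↔
      ∃ (X : Set (Fin d)) (w : Vec d) (π' πfwd : FSeq Q d),
        NonNeg w ∧ v ≤ w ∧
        RunX M X p u π' p w ∧
        (∃ z : Vec d, Run M (p, u) πfwd (p, z)) ∧
        (∀ x : Fin d, x ∉ X → Pumps M (p, u) πfwd x) ∧
        seqSupp π' = seqSupp πfwd :=
  coverability_characterization_general M hM p u v

end ACVASS
end

section
/- Let M be a d-dimensional affine continuous VASS all of whose transition matrices are non-negative self-loop matrices, let p(u) be a configuration, Y a set of counters, and let ρ = t₁,…,t_ℓ (with t_i = (p_{i−1}, A_i, b_i, p_i)) be a path in G_M from p to p (i.e., p₀ = p_ℓ = p) such that: (i) for every counter y and every index i with b_i(y) < 0, supp_{t_i}^-(y) ∩ (supp(u) ∪ ⋃_{1 ≤ j < i} supp_{t_j}^+) ≠ ∅; and (ii) for every y ∈ Y there exists an index i with supp_{t_i}^p(y) ∩ (supp(u) ∪ ⋃_{1 ≤ j ≤ ℓ} supp_{t_j}^+) ≠ ∅. Then there exists a firing sequence π that is p-admissible from p(u)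 and whose resulting run pumps all counters in Y. -/
namespace ACVASS

/-!
Self-loops keep every positive counter positive, and a small enough fraction `α` makes all
decrements of a step harmless wherever the affine part `A u` is positive. Hence the path can be
fired once from `u`, with every counter of `supp u` and of some `suppPlus (ts j)` positive at the
end. Now fire the path a second time: these counters are positive throughout, so each occurrence
of `ts i` pumps all the counters it can pump.
-/

section Scaling

open Filter Topology

variable {K : Type*} [Field K] [LinearOrder K] [IsStrictOrderedRing K]

theorem eventually_pos_add_mul [TopologicalSpace K] [OrderTopology K] {a b : K} (ha : 0 ≤ a)
    (hab : a ≠ 0 ∨ 0 < b) : ∀ᶠ α in 𝓝[>] (0 : K), 0 < a + α * b := by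
  rcases ha.eq_or_lt with rfl | ha
  · have hb : 0 < b := hab.resolve_left (not_not.2 rfl)
    filter_upwards [self_mem_nhdsWithin] with α hα
    simpa only [zero_add] using mul_pos hα hb
  · have hlim : Tendsto (fun α => a + α * b) (𝓝 0) (𝓝 a) :=
      (by fun_prop : Continuous fun α => a + α * b).tendsto' 0 a (by simp)
    exact (hlim.mono_left nhdsWithin_le_nhds).eventually_const_lt ha

theorem exists_support_add_smul_eq {ι : Type*} [Finite ι] {u b : ι → K} (hu : 0 ≤ u)
    (hb : ∀ i, b i < 0 → u i ≠ 0) :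
    ∃ α ∈ Set.Ioc (0 : K) 1, 0 ≤ u + α • b ∧
      Function.support (u + α • b) = Function.support u ∪ {i | 0 < b i} := by
  let _ : TopologicalSpace K := Preorder.topology K
  have : OrderTopology K := ⟨rfl⟩
  have hsmall : ∀ᶠ α in 𝓝[>] (0 : K), ∀ i, u i ≠ 0 ∨ 0 < b i → 0 < u i + α * b i :=
    eventually_all.2 fun i => eventually_imp_distrib_left.2 (eventually_pos_add_mul (hu i))
  obtain ⟨α, hpos, hα⟩ := (hsmall.and (Ioc_mem_nhdsGT zero_lt_one)).exists
  have hzero : ∀ i, ¬(u i ≠ 0 ∨ 0 < b i) → u i + α * b i = 0 := by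
    intro i hi
    obtain ⟨hui, hbi⟩ := not_or.1 hi
    have hbi0 : b i = 0 := le_antisymm (not_lt.1 hbi) (not_lt.1 (mt (hb i) hui))
    rw [not_not.1 hui, hbi0, mul_zero, add_zero]
  refine ⟨α, hα, fun i => ?_, Set.ext fun i =>
    ⟨fun hne => by_contra fun hi => hne (hzero i hi), fun hi => (hpos i hi).ne'⟩⟩
  by_cases hi : u i ≠ 0 ∨ 0 < b i
  · exact (hpos i hi).le
  · exact (hzero i hi).ge

end Scaling

section Pumping

variable {Q : Type} {d : ℕ} {M : ACV Q d}

theorem mem_supp_mulVec {A : Mat d} (hA : NonNegMat A) {w : Vec d} (hw : NonNeg w)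
    (x : Fin d) :
    x ∈ supp ((castMat A).mulVec w) ↔ ∃ y, 0 < A x y ∧ y ∈ supp w := by
  have hterm : ∀ y ∈ Finset.univ, 0 ≤ castMat A x y * w y := fun y _ =>
    mul_nonneg (Int.cast_nonneg (hA x y)) (hw y)
  have hne : ∀ y, castMat A x y * w y ≠ 0 ↔ 0 < A x y ∧ y ∈ supp w := fun y => by
    rw [mul_ne_zero_iff, castMat, Matrix.map_apply, Int.cast_ne_zero, (hA x y).lt_iff_ne']
    rfl
  change ∑ y, castMat A x y * w y ≠ 0 ↔ _
  simp only [ne_eq, Finset.sum_eq_zero_iff_of_nonneg hterm, Finset.mem_univ, true_imp_iff,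
    not_forall, ← hne]

theorem exists_step {t : Trans Q d} (ht : t ∈ M.T) (hA : NonNegMat t.mat) {w : Vec d}
    (hw : NonNeg w) (hdec : ∀ y, t.upd y < 0 → (suppMinus t y ∩ supp w).Nonempty) :
    ∃ α v, Step M (t.src, w) α t (t.tgt, v) ∧
      supp v = {x | (suppMinus t x ∩ supp w).Nonempty} ∪ suppPlus t := by
  have hAw : NonNeg ((castMat t.mat).mulVec w) := fun x =>
    Finset.sum_nonneg fun y _ => mul_nonneg (Int.cast_nonneg (hA x y)) (hw y)
  have hsupp : supp ((castMat t.mat).mulVec w) = {x | (suppMinus t x ∩ supp w).Nonempty} :=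
    Set.ext (mem_supp_mulVec hA hw)
  have hplus : suppPlus t = {x | 0 < castVec t.upd x} := Set.ext fun _ =>
    (Int.cast_pos (R := ℚ)).symm
  obtain ⟨α, ⟨hα0, hα1⟩, hv, hvsupp⟩ := exists_support_add_smul_eq hAw (b := castVec t.upd)
    fun y hy => (mem_supp_mulVec hA hw y).2 (hdec y (Int.cast_lt_zero.1 hy))
  exact ⟨α, _, ⟨ht, hα0, hα1, rfl, rfl, hw, hv, rfl⟩, by rw [← hsupp, hplus]; exact hvsupp⟩

theorem SelfLoopMat.mem_suppMinus {t : Trans Q d} (hA : SelfLoopMat t.mat) (x : Fin d) :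
    x ∈ suppMinus t x :=
  (hA.1 x x).lt_of_ne' (hA.2 x)

section Runs

variable {C C' C'' : Conf Q d} {π π' : FSeq Q d} {α : ℚ} {t : Trans Q d} {x : Fin d}

theorem Step.nonNeg_source (h : Step M C α t C') : NonNeg C.2 := h.2.2.2.2.2.1

theorem Step.nonNeg_target (h : Step M C α t C') : NonNeg C'.2 := h.2.2.2.2.2.2.1

theorem Run.append (h : Run M C π C') (h' : Run M C' π' C'') : Run M C (π ++ π') C'' := by
  induction h with
  | nil => exact h'
  | cons hstep _ ih => exact .cons hstep (ih h')

theorem Run.nonNeg_target (h : Run M C π C') : NonNeg C'.2 := by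
  induction h with
  | nil _ h => exact h
  | cons _ _ ih => exact ih

theorem Step.pumps (hstep : Step M C α t C') (h : (suppPump t x ∩ supp C.2).Nonempty)
    (π : FSeq Q d) : Pumps M C ((α, t) :: π) x := by
  obtain ⟨y, hy, hne⟩ := h
  exact ⟨t, [], α, π, C, C', rfl, .nil C hstep.nonNeg_source, hstep, y, hy,
    (hstep.nonNeg_source y).lt_of_ne' hne⟩

theorem Pumps.append_left (h : Pumps M C' π' x) (hrun : Run M C π C') :
    Pumps M C (π ++ π') x := by
  obtain ⟨t, π₁, α, π₂, C₁, C₂, rfl, hrun₁, hpump⟩ := h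
  exact ⟨t, π ++ π₁, α, π₂, C₁, C₂, (List.append_assoc ..).symm, hrun.append hrun₁, hpump⟩

theorem Pumps.cons (h : Pumps M C' π x) (hstep : Step M C α t C') :
    Pumps M C ((α, t) :: π) x :=
  h.append_left (.cons hstep (.nil C' hstep.nonNeg_target))

end Runs

/-- The transitions `ts` form a path of the graph `G_M` visiting the states `ps` in order. -/
structure IsPath_s5 {ℓ : ℕ} (M : ACV Q d) (ts : Fin ℓ → Trans Q d) (ps : Fin (ℓ + 1) → Q) : Prop where
  mem : ∀ i, ts i ∈ M.T
  src : ∀ i, (ts i).src = ps i.castSucc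
  tgt : ∀ i, (ts i).tgt = ps i.succ

/-- Condition (i) of the theorem, for an arbitrary set `X` of initially positive counters: each
decrement of a transition can be paid for by a counter which is in `X` or was incremented by an
earlier transition. -/
def DecrementsSupported {ℓ : ℕ} (X : Set (Fin d)) (ts : Fin ℓ → Trans Q d) : Prop :=
  ∀ (y : Fin d) (i : Fin ℓ), (ts i).upd y < 0 →
    (suppMinus (ts i) y ∩ (X ∪ ⋃ j ∈ {j : Fin ℓ | j < i}, suppPlus (ts j))).Nonempty

section Paths

variable {ℓ : ℕ} {X X' : Set (Fin d)}

theorem IsPath_s5.tail {ts : Fin (ℓ + 1) → Trans Q d} {ps : Fin (ℓ + 2) → Q} (h : IsPath_s5 M ts ps) :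
    IsPath_s5 M (Fin.tail ts) (Fin.tail ps) :=
  ⟨fun i => h.mem i.succ, fun i => h.src i.succ, fun i => h.tgt i.succ⟩

theorem DecrementsSupported.mono {ts : Fin ℓ → Trans Q d} (h : DecrementsSupported X ts)
    (hX : X ⊆ X') : DecrementsSupported X' ts := fun y i hy =>
  (h y i hy).mono (Set.inter_subset_inter_right _ (Set.union_subset_union_left _ hX))

theorem DecrementsSupported.head {ts : Fin (ℓ + 1) → Trans Q d} (h : DecrementsSupported X ts)
    {y : Fin d} (hy : (ts 0).upd y < 0) : (suppMinus (ts 0) y ∩ X).Nonempty := by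
  simpa using h y 0 hy

theorem DecrementsSupported.tail {ts : Fin (ℓ + 1) → Trans Q d} (h : DecrementsSupported X ts) :
    DecrementsSupported (X ∪ suppPlus (ts 0)) (Fin.tail ts) := by
  intro y i hy
  refine (h y i.succ hy).mono (Set.inter_subset_inter_right _ fun x hx => ?_)
  simpa [Fin.exists_fin_succ, or_assoc, Fin.tail] using hx

theorem exists_run_of_path {ts : Fin ℓ → Trans Q d} {ps : Fin (ℓ + 1) → Q} (hpath : IsPath_s5 M ts ps)
    (hloop : ∀ i, SelfLoopMat (ts i).mat) {w : Vec d} (hw : NonNeg w)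
    (hdec : DecrementsSupported (supp w) ts) :
    ∃ π z, Run M (ps 0, w) π (ps (Fin.last ℓ), z) ∧
      supp w ∪ ⋃ i, suppPlus (ts i) ⊆ supp z ∧
      ∀ i x, (suppPump (ts i) x ∩ supp w).Nonempty → Pumps M (ps 0, w) π x := by
  induction ℓ generalizing w with
  | zero => exact ⟨[], w, .nil _ hw, by simp, fun i => i.elim0⟩
  | succ ℓ ih =>
    obtain ⟨α, v, hstep, hv⟩ := exists_step (hpath.mem 0) (hloop 0).1 hw fun _ => hdec.head
    rw [hpath.src 0, hpath.tgt 0] at hstep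
    have hwv : supp w ∪ suppPlus (ts 0) ⊆ supp v :=
      hv ▸ Set.union_subset_union_left _ fun x hx =>
        ⟨x, (hloop 0).mem_suppMinus x, hx⟩
    obtain ⟨π, z, hrun, hvz, hpumps⟩ := ih hpath.tail (fun i => hloop i.succ)
      hstep.nonNeg_target (hdec.tail.mono hwv)
    refine ⟨(α, ts 0) :: π, z, .cons hstep hrun, ?_, Fin.cases (fun x hx => hstep.pumps hx π)
      fun i x hx => (hpumps i x ?_).cons hstep⟩
    · refine Set.Subset.trans (fun x hx => ?_) ((Set.union_subset_union_left _ hwv).trans hvz)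
      simpa [Fin.exists_fin_succ, or_assoc, Fin.tail] using hx
    · exact hx.mono (Set.inter_subset_inter_right _ (Set.subset_union_left.trans hwv))

end Paths

theorem admissible_pumping_sufficient_general {p : Q} {u : Vec d} {Y : Set (Fin d)} {ℓ : ℕ}
    {ts : Fin ℓ → Trans Q d} {ps : Fin (ℓ + 1) → Q} (hpath : IsPath_s5 M ts ps)
    (hloop : ∀ i, SelfLoopMat (ts i).mat) (h0 : ps 0 = p) (hlast : ps (Fin.last ℓ) = p)
    (hu : NonNeg u) (hdec : DecrementsSupported (supp u) ts)
    (hpump : ∀ y ∈ Y, ∃ i,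
      (suppPump (ts i) y ∩ (supp u ∪ ⋃ j, suppPlus (ts j))).Nonempty) :
    ∃ (π : FSeq Q d) (z : Vec d), Run M (p, u) π (p, z) ∧ ∀ y ∈ Y, Pumps M (p, u) π y := by
  obtain ⟨π₁, v, hrun₁, huv, -⟩ := exists_run_of_path hpath hloop hu hdec
  obtain ⟨π₂, z, hrun₂, -, hpumps⟩ := exists_run_of_path hpath hloop hrun₁.nonNeg_target
    (hdec.mono (Set.subset_union_left.trans huv))
  rw [h0] at hpumps
  rw [h0, hlast] at hrun₁ hrun₂
  refine ⟨π₁ ++ π₂, z, hrun₁.append hrun₂, fun y hy => ?_⟩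
  obtain ⟨i, hi⟩ := hpump y hy
  exact (hpumps i y (hi.mono (Set.inter_subset_inter_right _ huv))).append_left hrun₁

end Pumping

/-- a sufficient condition for the existence of a p-admissible
firing sequence pumping all counters of `Y`. -/
theorem admissible_pumping_sufficient
    {Q : Type} [Fintype Q] {d : ℕ} (M : ACV Q d) (hM : SelfLoopVASS M)
    (p : Q) (u : Vec d) (hu : NonNeg u) (Y : Set (Fin d))
    (ℓ : ℕ) (ts : Fin ℓ → Trans Q d) (ps : Fin (ℓ + 1) → Q)
    (hmem : ∀ i, ts i ∈ M.T)
    (hsrc : ∀ i : Fin ℓ, (ts i).src = ps i.castSucc)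
    (htgt : ∀ i : Fin ℓ, (ts i).tgt = ps i.succ)
    (h0 : ps 0 = p) (hlast : ps (Fin.last ℓ) = p)
    (hdec : ∀ (y : Fin d) (i : Fin ℓ), (ts i).upd y < 0 →
      (suppMinus (ts i) y ∩
        (supp u ∪ ⋃ j ∈ {j : Fin ℓ | j < i}, suppPlus (ts j))).Nonempty)
    (hpump : ∀ y ∈ Y, ∃ i : Fin ℓ,
      (suppPump (ts i) y ∩ (supp u ∪ ⋃ j : Fin ℓ, suppPlus (ts j))).Nonempty) :
    ∃ (π : FSeq Q d) (z : Vec d), Run M (p, u) π (p, z) ∧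
      ∀ y ∈ Y, Pumps M (p, u) π y := by
  exact admissible_pumping_sufficient_general ⟨hmem, hsrc, htgt⟩ (fun i => hM _ (hmem i)) h0 hlast
    hu hdec hpump

end ACVASS
end
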